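/- arXiv:1205.6578 — 2 statements merged into one kernel-verified Lean document; each statement's English description precedes it below -/
import Mathlib

section
/- For every permutation σ of {1,…,n}, the art statistic of DTR(zigzag_n, σ) equals the mad statistic of σ: art(DTR(zigzag_n, σ)) = mad(σ). -/
open Finset

noncomputable section

/-- A Dyck path of order `n`: a word of `2n` steps (`true` = up-step `(+1,+1)`,
`false` = down-step `(+1,-1)`) from `(-n,0)` to `(n,0)` staying weakly above the x-axis. -/
structure DyckPath (n : ℕ) where
  step : Fin (2 * n) → Bool
  balanced : (Finset.univ.filter fun i => step i = true).card = n
  nonneg : ∀ k : ℕ, k ≤ 2 * n →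
    (Finset.univ.filter fun i : Fin (2 * n) => (i : ℕ) < k ∧ step i = false).card ≤
      (Finset.univ.filter fun i : Fin (2 * n) => (i : ℕ) < k ∧ step i = true).card

namespace DyckPath

/-- Height of the path above column `x` (columns run from `-n` to `n`). -/
def ht {n : ℕ} (P : DyckPath n) (x : ℤ) : ℤ :=
  ((Finset.univ.filter fun i : Fin (2 * n) => ((i : ℕ) : ℤ) < x + n ∧ P.step i = true).card : ℤ) -
    ((Finset.univ.filter fun i : Fin (2 * n) => ((i : ℕ) : ℤ) < x + n ∧ P.step i = false).card : ℤ)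

/-- Height of the path at lattice point number `k`, `0 ≤ k ≤ 2n`
(point `k` lies at column `k - n`). -/
def pt {n : ℕ} (P : DyckPath n) (k : ℕ) : ℤ := P.ht ((k : ℤ) - n)

end DyckPath

/-- `IsChord P p q`: the up-step at (0-indexed) position `p` matches the down-step at
position `q`, forming a chord of `P`. -/
def IsChord {n : ℕ} (P : DyckPath n) (p q : ℕ) : Prop :=
  p < q ∧ q < 2 * n ∧
    (∃ hp : p < 2 * n, P.step ⟨p, hp⟩ = true) ∧
    (∃ hq : q < 2 * n, P.step ⟨q, hq⟩ = false) ∧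
    P.pt (q + 1) = P.pt p ∧
    ∀ m : ℕ, p < m → m ≤ q → P.pt p < P.pt m

/-- A natural labeling of the chord poset of `P`: the chord labeled `i` has its up-step at
(0-indexed) position `l i` and matching down-step at position `r i`; distinct labels name
distinct chords; and if one chord is nested inside another it receives a larger label. -/
structure ChordLabeling {n : ℕ} (P : DyckPath n) where
  l : Fin n → ℕ
  r : Fin n → ℕ
  chord : ∀ i, IsChord P (l i) (r i)
  inj : Function.Injective l
  natural : ∀ i j : Fin n, l j < l i → r i < r j → j < i

/-- The length of the chord labeled `i`: the number of up steps of `P` between and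
including its two endpoints. -/
def chordLen {n : ℕ} {P : DyckPath n} (C : ChordLabeling P) (i : Fin n) : ℕ :=
  (Finset.univ.filter fun m : Fin (2 * n) =>
    C.l i ≤ (m : ℕ) ∧ (m : ℕ) ≤ C.r i ∧ P.step m = true).card

/-- The growth sequence `p_1, …, p_n` associated with a natural chord labeling:
`p i = #{j<i : l j < l i} + #{j<i : r j < l i}`. -/
def seqOf {n : ℕ} {P : DyckPath n} (C : ChordLabeling P) (i : Fin n) : ℕ :=
  (Finset.univ.filter fun j : Fin n => j < i ∧ C.l j < C.l i).card +
    (Finset.univ.filter fun j : Fin n => j < i ∧ C.r j < C.l i).card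

/-- `σ` is the standardization of the word `w` (with distinct letters). -/
def IsStandardization {n : ℕ} (w : Fin n → ℕ) (σ : Equiv.Perm (Fin n)) : Prop :=
  ∀ i j : Fin n, σ i < σ j ↔ w i < w j

/-- `σ ∈ 𝓛(P_λ)`: σ is `L₀ ∘ L⁻¹` for some natural labeling `L` of the chord poset,
equivalently the standardization of the word of left endpoints of a natural labeling. -/
def LinExt {n : ℕ} (P : DyckPath n) (σ : Equiv.Perm (Fin n)) : Prop :=
  ∃ C : ChordLabeling P, IsStandardization C.l σ

/-- Successor index in `Fin n` (used only under the guard `i+1 < n`). -/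
def nextIdx {n : ℕ} (i : Fin n) : Fin n := ⟨((i : ℕ) + 1) % n, Nat.mod_lt _ i.pos⟩

/-- Descent set of a word: positions `i` with `i+1 < n` and `w i > w (i+1)`. -/
def descentFinset {n : ℕ} (w : Fin n → ℕ) : Finset (Fin n) :=
  Finset.univ.filter fun i => (i : ℕ) + 1 < n ∧ w (nextIdx i) < w i

/-- Number of inversions of a word. -/
def wordInv {n : ℕ} (w : Fin n → ℕ) : ℕ :=
  (Finset.univ.filter fun p : Fin n × Fin n => p.1 < p.2 ∧ w p.2 < w p.1).card

/-- The word of values of a permutation. -/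
def permWord {n : ℕ} (σ : Equiv.Perm (Fin n)) : Fin n → ℕ := fun i => (σ i : ℕ)

/-- inv(σ). -/
def permInv {n : ℕ} (σ : Equiv.Perm (Fin n)) : ℕ := wordInv (permWord σ)

/-- des(σ). -/
def permDes {n : ℕ} (σ : Equiv.Perm (Fin n)) : ℕ := (descentFinset (permWord σ)).card

/-- `REM_i(w) = {k > i : w i > w k > w (i+1)}`, the right embraced numbers. -/
def remSet {n : ℕ} (w : Fin n → ℕ) (i : Fin n) : Finset (Fin n) :=
  Finset.univ.filter fun k => i < k ∧ w (nextIdx i) < w k ∧ w k < w i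

/-- desdif(σ) = Σ_{i ∈ DES σ} (σ i − σ (i+1)). -/
def desdif {n : ℕ} (σ : Equiv.Perm (Fin n)) : ℕ :=
  ∑ i ∈ descentFinset (permWord σ), (permWord σ i - permWord σ (nextIdx i))

/-- res(σ) = Σ_{i ∈ DES σ} #{k < i : σ i > σ k > σ (i+1)}. -/
def resStat {n : ℕ} (σ : Equiv.Perm (Fin n)) : ℕ :=
  ∑ i ∈ descentFinset (permWord σ),
    (Finset.univ.filter fun k : Fin n =>
      k < i ∧ permWord σ (nextIdx i) < permWord σ k ∧ permWord σ k < permWord σ i).card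

/-- The Mahonian statistic mad(σ) = desdif(σ) + res(σ). -/
def mad {n : ℕ} (σ : Equiv.Perm (Fin n)) : ℕ := desdif σ + resStat σ

/-- σ avoids the pattern 231. -/
def Avoids231 {n : ℕ} (σ : Equiv.Perm (Fin n)) : Prop :=
  ¬∃ i j k : Fin n, i < j ∧ j < k ∧ σ k < σ i ∧ σ i < σ j

/-- The boxes of the skew shape `lam/mu` (with `mu` weakly above `lam`), each box
recorded by its bottom corner (a lattice point `(x, z)` with `z ≡ x + n (mod 2)`). -/
def skewCells {n : ℕ} (lam mu : DyckPath n) : Finset (ℤ × ℤ) :=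
  ((Finset.Icc (-(n : ℤ)) n) ×ˢ (Finset.Icc (0 : ℤ) n)).filter fun c =>
    lam.ht c.1 ≤ c.2 ∧ c.2 + 2 ≤ mu.ht c.1 ∧ (c.2 - c.1 - n) % 2 = 0

/-- A Dyck tile, recorded by the set of bottom corners of its boxes: these form
a Dyck-path shape, i.e. a ±1-step lattice path whose two ends are lowest. -/
def IsDyckTile (t : Finset (ℤ × ℤ)) : Prop :=
  ∃ (a b : ℤ) (f : ℤ → ℤ), a ≤ b ∧
    (∀ x : ℤ, a ≤ x → x < b → f (x + 1) = f x + 1 ∨ f (x + 1) = f x - 1) ∧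
    f b = f a ∧ (∀ x : ℤ, a ≤ x → x ≤ b → f a ≤ f x) ∧
    t = (Finset.Icc a b).image fun x => (x, f x)

/-- A Dyck tiling of order `n`: a tiling of the skew shape between two Dyck paths of
order `n` by Dyck tiles. -/
structure DyckTiling (n : ℕ) where
  lower : DyckPath n
  upper : DyckPath n
  below : ∀ x : ℤ, lower.ht x ≤ upper.ht x
  tiles : Finset (Finset (ℤ × ℤ))
  isDyck : ∀ t ∈ tiles, IsDyckTile t
  disj : ∀ t ∈ tiles, ∀ u ∈ tiles, t ≠ u → Disjoint t u
  cover : tiles.biUnion id = skewCells lower upper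

namespace DyckTiling

/-- Number of boxes of the skew shape. -/
def area {n : ℕ} (T : DyckTiling n) : ℕ := (skewCells T.lower T.upper).card

/-- Number of tiles. -/
def numTiles {n : ℕ} (T : DyckTiling n) : ℕ := T.tiles.card

/-- art(T) = (area(T) + tiles(T)) / 2. -/
def art {n : ℕ} (T : DyckTiling n) : ℕ := (T.area + T.numTiles) / 2

/-- dis(T): the number of step positions where the lower path steps down while the
upper path steps up. -/
def dis {n : ℕ} (T : DyckTiling n) : ℕ :=
  (Finset.univ.filter fun i : Fin (2 * n) =>
    T.lower.step i = false ∧ T.upper.step i = true).card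

/-- Cover-inclusiveness: whenever a tile has a box strictly above a box of another tile,
its horizontal extent is contained in that of the other tile. -/
def CoverInclusive {n : ℕ} (T : DyckTiling n) : Prop :=
  ∀ t ∈ T.tiles, ∀ u ∈ T.tiles,
    (∃ p ∈ t, ∃ q ∈ u, (p : ℤ × ℤ).1 = (q : ℤ × ℤ).1 ∧ (q : ℤ × ℤ).2 < (p : ℤ × ℤ).2) →
    ∀ p ∈ t, ∃ y : ℤ, ((p : ℤ × ℤ).1, y) ∈ u

end DyckTiling

/-- Height function of the spread at column `s` of a Dyck path. -/
def spreadHt {n : ℕ} (P : DyckPath n) (s x : ℤ) : ℤ :=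
  if x < s then P.ht (x + 1) else if x = s then P.ht s + 1 else P.ht (x - 1)

/-- Spread of a tile at column `s`: points left of `s` move left, points right of `s`
move right, and a point at column `s` is duplicated upward. -/
def spreadTile (s : ℤ) (t : Finset (ℤ × ℤ)) : Finset (ℤ × ℤ) :=
  ((t.filter fun p => p.1 ≤ s).image fun p => (p.1 - 1, p.2)) ∪
    ((t.filter fun p => p.1 = s).image fun p => (p.1, p.2 + 1)) ∪
    ((t.filter fun p => s ≤ p.1).image fun p => (p.1 + 1, p.2))

/-- Spread of a set of tiles at column `s`. -/
def spreadTiles (s : ℤ) (ts : Finset (Finset (ℤ × ℤ))) : Finset (Finset (ℤ × ℤ)) :=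
  ts.image (spreadTile s)

/-- Column `c` is eligible for a tiling with upper-boundary height function `h` and
tile set `ts`: the upper boundary has an up step ending at column `c`, and its point at
column `c` is not the top corner of a one-box tile. -/
def EligibleCol (h : ℤ → ℤ) (ts : Finset (Finset (ℤ × ℤ))) (c : ℤ) : Prop :=
  h c = h (c - 1) + 1 ∧ ({(c, h c - 2)} : Finset (ℤ × ℤ)) ∉ ts

/-- `T'` is the result of the strip-grow map applied to `(T, s)`: spread `T` at `s` and
add a one-box tile on each up step of the (spread) upper boundary starting at a column
`≥ s` (i.e. strictly to the right of column `s`). -/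
def StripGrowRel {n : ℕ} (T : DyckTiling n) (s : ℤ) (T' : DyckTiling (n + 1)) : Prop :=
  (∀ x : ℤ, T'.lower.ht x = spreadHt T.lower s x) ∧
  (∀ x : ℤ, T'.upper.ht x =
    if s ≤ x ∧ spreadHt T.upper s (x + 1) = spreadHt T.upper s x + 1 then
      spreadHt T.upper s x + 2
    else spreadHt T.upper s x) ∧
  T'.tiles = spreadTiles s T.tiles ∪
    ((Finset.Icc s (n : ℤ)).filter fun x =>
        spreadHt T.upper s (x + 1) = spreadHt T.upper s x + 1).image
      (fun x => ({(x, spreadHt T.upper s x)} : Finset (ℤ × ℤ)))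

/-- `T'` is the result of the ribbon-grow map applied to `(T, s)`: spread `T` at `s`,
and if the special column `Q` of the spread tiling is strictly right of `s`, add a
ribbon of one-box tiles at all columns strictly between `s` and `Q`. -/
def RibbonGrowRel {n : ℕ} (T : DyckTiling n) (s : ℤ) (T' : DyckTiling (n + 1)) : Prop :=
  (∀ x : ℤ, T'.lower.ht x = spreadHt T.lower s x) ∧
  ∃ Q : ℤ,
    EligibleCol (spreadHt T.upper s) (spreadTiles s T.tiles) Q ∧
    (∀ c : ℤ, EligibleCol (spreadHt T.upper s) (spreadTiles s T.tiles) c → c ≤ Q) ∧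
    (∀ x : ℤ, T'.upper.ht x =
      if s < x ∧ x < Q then spreadHt T.upper s x + 2 else spreadHt T.upper s x) ∧
    T'.tiles = spreadTiles s T.tiles ∪
      (Finset.Ioo s Q).image (fun x => ({(x, spreadHt T.upper s x)} : Finset (ℤ × ℤ)))

/-- `s` is the special column of `T`: its rightmost eligible column. -/
def SpecialCol {n : ℕ} (T : DyckTiling n) (s : ℤ) : Prop :=
  EligibleCol T.upper.ht T.tiles s ∧ ∀ c : ℤ, EligibleCol T.upper.ht T.tiles c → c ≤ s

/-- In the strip-shrink map applied to `T'` with special column `s`, a one-box tile is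
removed at column `x`: `x` is right of `s` and there is a one-box tile there that is
part of an up step of the upper boundary. -/
def StripRemovedAt {n : ℕ} (T' : DyckTiling n) (s x : ℤ) : Prop :=
  s < x ∧ T'.upper.ht x = T'.upper.ht (x - 1) + 1 ∧
    ({(x, T'.upper.ht x - 2)} : Finset (ℤ × ℤ)) ∈ T'.tiles

instance {n : ℕ} (T' : DyckTiling n) (s x : ℤ) : Decidable (StripRemovedAt T' s x) := by
  unfold StripRemovedAt; infer_instance

/-- `(T, s)` is the result of the strip-shrink map applied to `T'`: `s` is the special
column of `T'`; all one-box tiles right of `s` lying on up steps of the upper boundary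
are removed; and the result is the spread of `T` at `s`. -/
def StripShrinkRel {n : ℕ} (T' : DyckTiling (n + 1)) (T : DyckTiling n) (s : ℤ) : Prop :=
  SpecialCol T' s ∧
  (∀ x : ℤ, spreadHt T.lower s x = T'.lower.ht x) ∧
  (∀ x : ℤ, spreadHt T.upper s x =
    if StripRemovedAt T' s x then T'.upper.ht x - 2 else T'.upper.ht x) ∧
  spreadTiles s T.tiles =
    T'.tiles \ (((Finset.Ioc s ((n : ℤ) + 1)).filter fun x => StripRemovedAt T' s x).image
      fun x => ({(x, T'.upper.ht x - 2)} : Finset (ℤ × ℤ)))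

/-- `(T, s)` is the result of the ribbon-shrink map applied to `T'`: `s` is the special
column of `T'`; the maximal run of topmost one-box tiles in columns `s+1, s+2, …` is
removed; and the result is the spread of `T` at `s`. -/
def RibbonShrinkRel {n : ℕ} (T' : DyckTiling (n + 1)) (T : DyckTiling n) (s : ℤ) : Prop :=
  SpecialCol T' s ∧
  ∃ r : ℤ, s < r ∧
    (∀ x : ℤ, s < x → x < r → ({(x, T'.upper.ht x - 2)} : Finset (ℤ × ℤ)) ∈ T'.tiles) ∧
    ({(r, T'.upper.ht r - 2)} : Finset (ℤ × ℤ)) ∉ T'.tiles ∧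
    (∀ x : ℤ, spreadHt T.lower s x = T'.lower.ht x) ∧
    (∀ x : ℤ, spreadHt T.upper s x =
      if s < x ∧ x < r then T'.upper.ht x - 2 else T'.upper.ht x) ∧
    spreadTiles s T.tiles =
      T'.tiles \ ((Finset.Ioo s r).image fun x => ({(x, T'.upper.ht x - 2)} : Finset (ℤ × ℤ)))

/-- `IsDTS n p T`: `T` is the Dyck tiling `DTS(p_1, …, p_n)` (indices 0-based, so the
growth column for step `i` is `p i - i`). -/
inductive IsDTS : (n : ℕ) → (Fin n → ℕ) → DyckTiling n → Prop where
  | nil (p : Fin 0 → ℕ) (T : DyckTiling 0) : IsDTS 0 p T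
  | cons (n : ℕ) (p : Fin (n + 1) → ℕ) (T : DyckTiling n) (T' : DyckTiling (n + 1)) :
      IsDTS n (fun i => p i.castSucc) T →
      StripGrowRel T ((p (Fin.last n) : ℤ) - n) T' → IsDTS (n + 1) p T'

/-- `IsDTR n p T`: `T` is the Dyck tiling `DTR(p_1, …, p_n)`. -/
inductive IsDTR : (n : ℕ) → (Fin n → ℕ) → DyckTiling n → Prop where
  | nil (p : Fin 0 → ℕ) (T : DyckTiling 0) : IsDTR 0 p T
  | cons (n : ℕ) (p : Fin (n + 1) → ℕ) (T : DyckTiling n) (T' : DyckTiling (n + 1)) :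
      IsDTR n (fun i => p i.castSucc) T →
      RibbonGrowRel T ((p (Fin.last n) : ℤ) - n) T' → IsDTR (n + 1) p T'

/-- `T = DTS(λ, σ)`. -/
def IsDTSof {n : ℕ} (lam : DyckPath n) (σ : Equiv.Perm (Fin n)) (T : DyckTiling n) : Prop :=
  ∃ C : ChordLabeling lam, IsStandardization C.l σ ∧ IsDTS n (seqOf C) T

/-- `T = DTR(λ, σ)`. -/
def IsDTRof {n : ℕ} (lam : DyckPath n) (σ : Equiv.Perm (Fin n)) (T : DyckTiling n) : Prop :=
  ∃ C : ChordLabeling lam, IsStandardization C.l σ ∧ IsDTR n (seqOf C) T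

/-- Increment `a` if it exceeds `p`. -/
def bump (p a : ℕ) : ℕ := if p < a then a + 1 else a

/-- The perfect matching `match(p_1, …, p_n)` of `{1, …, 2n}`. -/
def matchSeq : (n : ℕ) → (Fin n → ℕ) → Finset (ℕ × ℕ)
  | 0, _ => ∅
  | n + 1, p =>
    ((matchSeq n fun i => p i.castSucc).image fun q =>
      (bump (p (Fin.last n)) q.1, bump (p (Fin.last n)) q.2)) ∪
      {(p (Fin.last n) + 1, 2 * (n + 1))}

/-- The number of nestings of a matching: pairs `(a,b)`, `(c,d)` with `c < a < b < d`. -/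
def nestings (M : Finset (ℕ × ℕ)) : ℕ :=
  ((M ×ˢ M).filter fun q => q.2.1 < q.1.1 ∧ q.1.1 < q.1.2 ∧ q.1.2 < q.2.2).card

/-- `w` is the min-word of `M`: the list of the smaller elements of the pairs of `M`,
sorted by the larger elements. -/
def IsMinWord (n : ℕ) (M : Finset (ℕ × ℕ)) (w : Fin n → ℕ) : Prop :=
  ∃ b : Fin n → ℕ, StrictMono b ∧ (∀ i, w i < b i) ∧
    M = Finset.univ.image fun i => (w i, b i)

/-- The number of tiles of `T` containing boxes over both endpoint columns of the
chord with endpoints at step positions `p < q`. -/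
def chordTileCount {n : ℕ} (T : DyckTiling n) (p q : ℕ) : ℕ :=
  (T.tiles.filter fun t =>
    (∃ c ∈ t, (c : ℤ × ℤ).1 = (p : ℤ) + 1 - n) ∧ (∃ c ∈ t, (c : ℤ × ℤ).1 = (q : ℤ) - n)).card

/-- A Dyck tableau of order `n` over the zigzag path `Z` of order `n+1`: a skew shape
`Z/μ` with `n` dots, one in each column of the skew shape through a valley of `Z`. -/
structure DyckTableau (n : ℕ) (Z : DyckPath (n + 1)) where
  upper : DyckPath (n + 1)
  below : ∀ x : ℤ, Z.ht x ≤ upper.ht x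
  dots : Finset (ℤ × ℤ)
  sub : dots ⊆ skewCells Z upper
  card_dots : dots.card = n
  valley : ∀ x : ℤ, Z.ht (x - 1) = Z.ht x + 1 → Z.ht (x + 1) = Z.ht x + 1 →
    (dots.filter fun c => c.1 = x).card = 1

/-- The `q`-integer `[m]_q = 1 + q + ⋯ + q^(m-1)` as a polynomial. -/
def qint (m : ℕ) : Polynomial ℤ := ∑ i ∈ Finset.range m, Polynomial.X ^ i

/-- The `q`-factorial `[n]_q!`. -/
def qfact (n : ℕ) : Polynomial ℤ := ∏ i ∈ Finset.range n, qint (i + 1)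

/-!
The valleys of the zigzag path of order `n`, including both ends, are the gaps between the first
`n` letters of `σ` sorted by value, and the next letter is inserted by growing at its gap. Two
facts hold throughout the growth: above each gap the upper path has height twice the number of
descents `σ_i > σ_{i+1}` straddling that gap, and the special column is the one where the last
letter was inserted. Hence inserting a letter enlarges by two boxes one tile for each descent
straddling it, and adds a ribbon, filling the columns up to the previous letter, exactly when it
creates a descent. The first contribution is the increase of `desdif` over the old descents, and
the ribbon accounts for the terms of `desdif` and `res` at the new descent.
-/

/-! ### Heights of Dyck paths -/

namespace DyckPath

variable {n : ℕ} (P : DyckPath n)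

lemma pt_eq_sum (k : ℕ) :
    P.pt k = ∑ i : Fin (2 * n), if (i : ℕ) < k then (if P.step i then 1 else -1) else 0 := by
  simp only [pt, ht, card_filter]
  push_cast
  rw [← sum_sub_distrib]
  refine sum_congr rfl fun i _ => ?_
  by_cases hi : (i : ℕ) < k <;> cases P.step i <;> simp [hi]

lemma pt_zero : P.pt 0 = 0 := by
  simp [pt_eq_sum]

lemma pt_succ {k : ℕ} (hk : k < 2 * n) :
    P.pt (k + 1) = P.pt k + if P.step ⟨k, hk⟩ then 1 else -1 := by
  have hsplit (i : Fin (2 * n)) (a : ℤ) : (if (i : ℕ) < k + 1 then a else 0) =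
      (if (i : ℕ) < k then a else 0) + if i = ⟨k, hk⟩ then a else 0 := by
    simp only [Fin.ext_iff]
    split_ifs <;> omega
  simp only [pt_eq_sum, hsplit, sum_add_distrib, sum_ite_eq', mem_univ, if_true]

lemma pt_nonneg {k : ℕ} (hk : k ≤ 2 * n) : 0 ≤ P.pt k := by
  simpa [pt, ht] using P.nonneg k hk

lemma even_pt_sub {k : ℕ} (hk : k ≤ 2 * n) : Even (P.pt k - k) := by
  induction k with
  | zero => simp [pt_zero]
  | succ k ih =>
    obtain ⟨d, hd⟩ := ih (by omega)
    rw [P.pt_succ hk]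
    split_ifs
    · exact ⟨d, by push_cast; omega⟩
    · exact ⟨d - 1, by push_cast; omega⟩

lemma ht_le (x : ℤ) : P.ht x ≤ n := by
  have hup : #{i : Fin (2 * n) | ((i : ℕ) : ℤ) < x + n ∧ P.step i = true} ≤ n :=
    (card_le_card <| monotone_filter_right _ fun _ _ hi => hi.2).trans_eq P.balanced
  unfold ht
  omega

lemma ht_of_order_zero (P : DyckPath 0) (x : ℤ) : P.ht x = 0 := by
  have : IsEmpty (Fin (2 * 0)) := inferInstanceAs (IsEmpty (Fin 0))
  simp [ht, univ_eq_empty]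

end DyckPath

lemma two_mul_card_skewCells_column {n : ℕ} (lam mu : DyckPath n) {s : ℤ}
    (hs : s ∈ Icc (-(n : ℤ)) n) (hle : lam.ht s ≤ mu.ht s) :
    2 * (#{c ∈ skewCells lam mu | c.1 = s} : ℤ) = mu.ht s - lam.ht s := by
  obtain ⟨k, hk, rfl⟩ : ∃ k : ℕ, k ≤ 2 * n ∧ s = k - n := by
    rw [mem_Icc] at hs
    exact ⟨(s + n).toNat, by omega, by omega⟩
  have hnonneg : 0 ≤ lam.ht (k - n) := lam.pt_nonneg hk
  have hmu := mu.ht_le (k - n)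
  obtain ⟨a, ha⟩ : Even (lam.ht (k - n) - k) := lam.even_pt_sub hk
  obtain ⟨b, hb⟩ : Even (mu.ht (k - n) - k) := mu.even_pt_sub hk
  obtain ⟨d, hd⟩ : ∃ d : ℕ, b - a = d := Int.eq_ofNat_of_zero_le (by omega)
  have hcol : {c ∈ skewCells lam mu | c.1 = (k : ℤ) - n} =
      (range d).image fun i : ℕ => ((k : ℤ) - n, lam.ht (k - n) + 2 * i) := by
    ext ⟨x, z⟩
    simp only [skewCells, mem_filter, mem_product, mem_image, mem_range, Prod.mk.injEq]
    constructor
    · rintro ⟨⟨-, hlow, hup, hpar⟩, rfl⟩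
      exact ⟨((z - lam.ht (k - n)) / 2).toNat, by omega, rfl, by omega⟩
    · rintro ⟨i, hi, rfl, rfl⟩
      exact ⟨⟨⟨hs, by rw [mem_Icc]; omega⟩, by omega, by omega, by omega⟩, rfl⟩
  rw [hcol, card_image_of_injective _ fun i j h => by simpa using h, card_range]
  omega

namespace DyckTiling

variable {n : ℕ}

lemma sum_card_filter_tiles (T : DyckTiling n) (p : ℤ × ℤ → Prop) [DecidablePred p] :
    ∑ t ∈ T.tiles, #{c ∈ t | p c} = #{c ∈ skewCells T.lower T.upper | p c} := by
  rw [← T.cover, filter_biUnion, card_biUnion]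
  · rfl
  · exact fun t ht u hu h =>
      (T.disj t ht u hu h).mono (filter_subset _ _) (filter_subset _ _)

lemma area_eq_sum_card (T : DyckTiling n) : T.area = ∑ t ∈ T.tiles, #t := by
  simpa [area] using (T.sum_card_filter_tiles fun _ => True).symm

lemma numTiles_le_area (T : DyckTiling n) : T.numTiles ≤ T.area := by
  rw [area_eq_sum_card, numTiles, card_eq_sum_ones]
  refine sum_le_sum fun t ht => ?_
  obtain ⟨a, b, f, hab, -, -, -, rfl⟩ := T.isDyck t ht
  exact ((nonempty_Icc.2 hab).image _).card_pos

lemma area_of_order_zero (T : DyckTiling 0) : T.area = 0 := by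
  rw [area, card_eq_zero, skewCells, filter_eq_empty_iff]
  intro c _
  simp only [DyckPath.ht_of_order_zero]
  omega

lemma numTiles_of_order_zero (T : DyckTiling 0) : T.numTiles = 0 :=
  Nat.le_zero.1 (T.numTiles_le_area.trans_eq T.area_of_order_zero)

end DyckTiling

/-! ### Spreading tiles -/

section Spread

variable {s : ℤ}

lemma mem_spreadTile {t : Finset (ℤ × ℤ)} {x z : ℤ} :
    (x, z) ∈ spreadTile s t ↔
      (x < s ∧ (x + 1, z) ∈ t) ∨ (x = s ∧ (s, z - 1) ∈ t) ∨ (s < x ∧ (x - 1, z) ∈ t) := by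
  simp only [spreadTile, mem_union, mem_image, mem_filter, Prod.exists, Prod.mk.injEq, or_assoc]
  refine or_congr ?_ (or_congr ?_ ?_)
  · constructor
    · rintro ⟨a, b, ⟨hmem, ha⟩, rfl, rfl⟩
      exact ⟨by omega, by simpa using hmem⟩
    · rintro ⟨hx, hmem⟩
      exact ⟨x + 1, z, ⟨hmem, by omega⟩, by omega, rfl⟩
  · constructor
    · rintro ⟨a, b, ⟨hmem, rfl⟩, rfl, rfl⟩
      exact ⟨rfl, by simpa using hmem⟩
    · rintro ⟨rfl, hmem⟩
      exact ⟨x, z - 1, ⟨hmem, rfl⟩, rfl, by omega⟩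
  · constructor
    · rintro ⟨a, b, ⟨hmem, ha⟩, rfl, rfl⟩
      exact ⟨by omega, by simpa using hmem⟩
    · rintro ⟨hx, hmem⟩
      exact ⟨x - 1, z, ⟨hmem, by omega⟩, by omega, rfl⟩

lemma spreadTile_injective (s : ℤ) : Function.Injective (spreadTile s) := by
  intro t u h
  ext ⟨x, z⟩
  rcases le_or_gt x s with hx | hx
  · have hleft : (x - 1, z) ∈ spreadTile s t ↔ (x - 1, z) ∈ spreadTile s u := by rw [h]
    simpa [mem_spreadTile, show x - 1 < s by omega, show x - 1 ≠ s by omega,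
      show ¬ s < x - 1 by omega] using hleft
  · have hright : (x + 1, z) ∈ spreadTile s t ↔ (x + 1, z) ∈ spreadTile s u := by rw [h]
    simpa [mem_spreadTile, show s < x + 1 by omega, show x + 1 ≠ s by omega,
      show ¬ x + 1 < s by omega] using hright

lemma card_spreadTile (s : ℤ) (t : Finset (ℤ × ℤ)) :
    #(spreadTile s t) = #t + 2 * #{c ∈ t | c.1 = s} := by
  have hsplit : #{c ∈ t | c.1 ≤ s} + #{c ∈ t | s ≤ c.1} = #t + #{c ∈ t | c.1 = s} := by
    rw [← card_union_add_card_inter, ← filter_or, ← filter_and,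
      filter_true_of_mem fun c _ => le_total _ _]
    simp only [← le_antisymm_iff]
  rw [spreadTile, card_union_of_disjoint, card_union_of_disjoint, card_image_of_injective,
    card_image_of_injective, card_image_of_injective]
  · omega
  · exact fun _ _ h => by simpa [Prod.ext_iff] using h
  · exact fun _ _ h => by simpa [Prod.ext_iff] using h
  · exact fun _ _ h => by simpa [Prod.ext_iff] using h
  · simp only [disjoint_left, mem_image, mem_filter]
    rintro _ ⟨a, ⟨-, ha⟩, rfl⟩ ⟨b, ⟨-, hb⟩, hab⟩
    simp only [Prod.mk.injEq] at hab
    omega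
  · simp only [disjoint_left, mem_union, mem_image, mem_filter]
    rintro _ (⟨a, ⟨-, ha⟩, rfl⟩ | ⟨a, ⟨-, ha⟩, rfl⟩) ⟨b, ⟨-, hb⟩, hab⟩ <;>
    · simp only [Prod.mk.injEq] at hab
      omega

lemma spreadTile_singleton {x : ℤ} (hx : s < x) (z : ℤ) :
    spreadTile s {(x, z)} = {(x + 1, z)} := by
  ext ⟨a, b⟩
  simp only [mem_spreadTile, mem_singleton, Prod.mk.injEq]
  omega

lemma singleton_mem_spreadTiles_iff {x : ℤ} (hx : s < x) (z : ℤ)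
    (ts : Finset (Finset (ℤ × ℤ))) :
    {(x + 1, z)} ∈ spreadTiles s ts ↔ {(x, z)} ∈ ts := by
  rw [spreadTiles, ← spreadTile_singleton hx z]
  exact (spreadTile_injective s).mem_finset_image

lemma singleton_notMem_spreadTiles (s z : ℤ) (ts : Finset (Finset (ℤ × ℤ))) :
    {(s, z)} ∉ spreadTiles s ts := by
  intro h
  obtain ⟨t, -, ht⟩ := mem_image.1 h
  have hmid : (s, z) ∈ spreadTile s t := by simp [ht]
  have hmem : (s, z - 1) ∈ t := by simpa [mem_spreadTile] using hmid
  have hleft : (s - 1, z - 1) ∈ spreadTile s t :=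
    mem_spreadTile.2 (.inl ⟨by omega, by simpa using hmem⟩)
  simp [ht] at hleft

variable {n : ℕ} (P : DyckPath n)

lemma spreadHt_of_lt {x : ℤ} (hx : x < s) : spreadHt P s x = P.ht (x + 1) :=
  if_pos hx

lemma spreadHt_self (s : ℤ) : spreadHt P s s = P.ht s + 1 := by
  simp [spreadHt]

lemma spreadHt_of_gt {x : ℤ} (hx : s < x) : spreadHt P s x = P.ht (x - 1) := by
  rw [spreadHt, if_neg hx.not_gt, if_neg hx.ne']

lemma eligibleCol_spread_self (ts : Finset (Finset (ℤ × ℤ))) (s : ℤ) :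
    EligibleCol (spreadHt P s) (spreadTiles s ts) s :=
  ⟨by simp [spreadHt], singleton_notMem_spreadTiles _ _ _⟩

lemma eligibleCol_spread_succ_iff (ts : Finset (Finset (ℤ × ℤ))) {x : ℤ} (hx : s ≤ x) :
    EligibleCol (spreadHt P s) (spreadTiles s ts) (x + 1) ↔ s < x ∧ EligibleCol P.ht ts x := by
  have hright : spreadHt P s (x + 1) = P.ht x := by
    rw [spreadHt_of_gt P (by omega), add_sub_cancel_right]
  rcases hx.eq_or_lt with rfl | hx
  · simp only [EligibleCol, hright, add_sub_cancel_right, spreadHt_self]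
    omega
  · simp [EligibleCol, hright, spreadHt_of_gt P hx, hx, singleton_mem_spreadTiles_iff hx]

end Spread

/-! ### Ribbons -/

/-- The one-box tiles lying on the spread of `P` at `s`, one in each column of `R`. -/
def ribbonTiles {n : ℕ} (P : DyckPath n) (s : ℤ) (R : Finset ℤ) : Finset (Finset (ℤ × ℤ)) :=
  R.image fun x => {(x, spreadHt P s x)}

lemma singleton_mem_ribbonTiles_iff {n : ℕ} {P : DyckPath n} {s : ℤ} {R : Finset ℤ} {x z : ℤ} :
    {(x, z)} ∈ ribbonTiles P s R ↔ x ∈ R ∧ z = spreadHt P s x := by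
  simp only [ribbonTiles, mem_image, singleton_inj, Prod.mk.injEq]
  constructor
  · rintro ⟨y, hy, rfl, rfl⟩
    exact ⟨hy, rfl⟩
  · rintro ⟨hx, rfl⟩
    exact ⟨x, hx, rfl, rfl⟩

namespace DyckTiling

variable {n : ℕ} {T : DyckTiling n} {T' : DyckTiling (n + 1)} {s : ℤ} {R : Finset ℤ}

lemma disjoint_spreadTiles_ribbonTiles (hR : ∀ x ∈ R, s < x) :
    Disjoint (spreadTiles s T.tiles) (ribbonTiles T.upper s R) := by
  simp only [disjoint_left, spreadTiles, ribbonTiles, mem_image]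
  rintro _ ⟨t, ht, rfl⟩ ⟨x, hx, hxt⟩
  have hmem : (x, spreadHt T.upper s x) ∈ spreadTile s t := by simp [← hxt]
  have hsx := hR x hx
  rw [mem_spreadTile, spreadHt_of_gt _ hsx] at hmem
  have hcell : (x - 1, T.upper.ht (x - 1)) ∈ T.tiles.biUnion id :=
    mem_biUnion.2 ⟨t, ht, (hmem.resolve_left fun h => by omega).resolve_left (fun h => by omega)
      |>.2⟩
  simp only [T.cover, skewCells, mem_filter] at hcell
  omega

lemma area_of_tiles_eq (hR : ∀ x ∈ R, s < x)
    (hT' : T'.tiles = spreadTiles s T.tiles ∪ ribbonTiles T.upper s R) :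
    T'.area = T.area + 2 * #{c ∈ skewCells T.lower T.upper | c.1 = s} + #R := by
  rw [area_eq_sum_card, hT', sum_union (disjoint_spreadTiles_ribbonTiles hR), spreadTiles,
    sum_image (spreadTile_injective s).injOn, ribbonTiles, sum_image (by simp +contextual)]
  simp only [card_spreadTile, sum_add_distrib, ← mul_sum, sum_card_filter_tiles,
    ← area_eq_sum_card, card_singleton, ← card_eq_sum_ones]

lemma numTiles_of_tiles_eq (hR : ∀ x ∈ R, s < x)
    (hT' : T'.tiles = spreadTiles s T.tiles ∪ ribbonTiles T.upper s R) :
    T'.numTiles = T.numTiles + #R := by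
  rw [numTiles, hT', card_union_of_disjoint (disjoint_spreadTiles_ribbonTiles hR), spreadTiles,
    card_image_of_injective _ (spreadTile_injective s), ribbonTiles,
    card_image_of_injective _ fun x y h => by simp_all, numTiles]

end DyckTiling

namespace RibbonGrowRel

variable {n : ℕ} {T : DyckTiling n} {T' : DyckTiling (n + 1)} {s : ℤ}

lemma specialCol (h : RibbonGrowRel T s T') : SpecialCol T' s := by
  obtain ⟨-, Q, hQ, hmax, hupper, htiles⟩ := h
  have hsQ : s ≤ Q := hmax s (eligibleCol_spread_self _ _ _)
  have htile {x z : ℤ} : {(x, z)} ∈ T'.tiles ↔ {(x, z)} ∈ spreadTiles s T.tiles ∨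
      x ∈ Ioo s Q ∧ z = spreadHt T.upper s x := by
    rw [htiles, mem_union]
    exact or_congr_right singleton_mem_ribbonTiles_iff
  refine ⟨⟨?_, ?_⟩, fun c hc => ?_⟩
  · rw [hupper, hupper, if_neg (by omega), if_neg (by omega)]
    exact (eligibleCol_spread_self T.upper T.tiles s).1
  · simp [htile, singleton_notMem_spreadTiles]
  · by_contra! hsc
    obtain ⟨hstep, htop⟩ := hc
    rcases lt_trichotomy c Q with hcQ | rfl | hcQ
    · refine htop (htile.2 <| .inr ⟨mem_Ioo.2 ⟨hsc, hcQ⟩, ?_⟩)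
      rw [hupper, if_pos ⟨hsc, hcQ⟩, add_sub_cancel_right]
    · have hsc' : s < c - 1 :=
        ((eligibleCol_spread_succ_iff T.upper T.tiles (Int.le_sub_one_of_lt hsc)).1
          (by rwa [sub_add_cancel])).1
      rw [hupper, hupper, if_neg (by omega), if_pos (by omega), hQ.1] at hstep
      omega
    · rw [hupper, hupper, if_neg (by omega), if_neg (by omega)] at hstep
      rw [htile, hupper, if_neg (by omega), not_or] at htop
      exact hcQ.not_ge (hmax c ⟨hstep, htop.1⟩)

variable {c : ℤ}

lemma Ioo_eq_Ioc {Q : ℤ}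
    (hQ : EligibleCol (spreadHt T.upper s) (spreadTiles s T.tiles) Q)
    (hQmax : ∀ x, EligibleCol (spreadHt T.upper s) (spreadTiles s T.tiles) x → x ≤ Q)
    (hmax : ∀ x, EligibleCol T.upper.ht T.tiles x → x ≤ c)
    (hc : s < c → EligibleCol T.upper.ht T.tiles c) : Ioo s Q = Ioc s c := by
  have hcQ (hsc : s < c) : c + 1 ≤ Q :=
    hQmax _ ((eligibleCol_spread_succ_iff _ _ hsc.le).2 ⟨hsc, hc hsc⟩)
  have hQc (hsQ : s < Q) : Q - 1 ≤ c :=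
    hmax _ ((eligibleCol_spread_succ_iff _ _ (Int.le_sub_one_of_lt hsQ)).1
      (by rwa [sub_add_cancel])).2
  ext x
  rw [mem_Ioo, mem_Ioc]
  omega

lemma upper_ht_eq (h : RibbonGrowRel T s T')
    (hmax : ∀ x, EligibleCol T.upper.ht T.tiles x → x ≤ c)
    (hc : s < c → EligibleCol T.upper.ht T.tiles c) (x : ℤ) :
    T'.upper.ht x = spreadHt T.upper s x + if s < x ∧ x ≤ c then 2 else 0 := by
  obtain ⟨-, Q, hQ, hQmax, hupper, -⟩ := h
  have hribbon : s < x ∧ x < Q ↔ s < x ∧ x ≤ c := by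
    rw [← mem_Ioo, ← mem_Ioc, Ioo_eq_Ioc hQ hQmax hmax hc]
  simp only [hupper, hribbon]
  split_ifs <;> simp

lemma area_add_numTiles_eq (h : RibbonGrowRel T s T')
    (hmax : ∀ x, EligibleCol T.upper.ht T.tiles x → x ≤ c)
    (hc : s < c → EligibleCol T.upper.ht T.tiles c) :
    T'.area + T'.numTiles = T.area + T.numTiles +
      2 * (#{b ∈ skewCells T.lower T.upper | b.1 = s} + #(Ioc s c)) := by
  obtain ⟨-, Q, hQ, hQmax, -, htiles⟩ := h
  rw [Ioo_eq_Ioc hQ hQmax hmax hc] at htiles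
  have hR (x : ℤ) (hx : x ∈ Ioc s c) : s < x := (mem_Ioc.1 hx).1
  rw [DyckTiling.area_of_tiles_eq hR htiles, DyckTiling.numTiles_of_tiles_eq hR htiles]
  ring

end RibbonGrowRel

/-! ### Statistics of words -/

section Word

variable {α : Type*} [LinearOrder α]

/-- The number of the first `n` letters of `w` that are smaller than `v`. -/
def countBelow (w : ℕ → α) (n : ℕ) (v : α) : ℕ := Nat.count (fun j => w j < v) n

/-- The number of the first `n` letters of `w` that lie in `[u, v)`. -/
def countBetween (w : ℕ → α) (n : ℕ) (u v : α) : ℕ := Nat.count (fun j => u ≤ w j ∧ w j < v) n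

/-- The number of descents straddling the value `v` among the first `m` pairs of adjacent
letters of `w`, that is, among the first `m + 1` letters. -/
def countStraddles (w : ℕ → α) (m : ℕ) (v : α) : ℕ :=
  Nat.count (fun i => w (i + 1) < v ∧ v ≤ w i) m

/-- The `mad` statistic of the standardization of the first `m + 1` letters of a word `w` with
distinct letters: in the term for `i`, the first summand is the difference of the two adjacent
letters after standardization, the second counts the embraced letters on the left. Both vanish
unless `i` is a descent. -/
def prefixMad (w : ℕ → α) (m : ℕ) : ℕ :=
  ∑ i ∈ range m,
    (countBetween w (m + 1) (w (i + 1)) (w i) + countBetween w i (w (i + 1)) (w i))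

/-- The column of the valley of the zigzag path of order `n` that lies between the letters
smaller than `v` and the others, when the `n` peaks carry the first `n` letters of `w` in
increasing order. In particular `gapCol w n (w n)` is the growth column for the letter `w n`. -/
def gapCol (w : ℕ → α) (n : ℕ) (v : α) : ℤ := 2 * countBelow w n v - n

variable (w : ℕ → α)

lemma countBelow_mono (n : ℕ) {u v : α} (h : u ≤ v) : countBelow w n u ≤ countBelow w n v :=
  Nat.count_mono_left fun _ _ hj => hj.trans_le h

lemma countBetween_eq_zero (n : ℕ) {u v : α} (h : v ≤ u) : countBetween w n u v = 0 :=
  Nat.count_iff_forall_not.2 fun _ _ hj => (hj.2.trans_le h).not_ge hj.1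

lemma countBetween_succ (n : ℕ) (u v : α) :
    countBetween w (n + 1) u v = countBetween w n u v + if u ≤ w n ∧ w n < v then 1 else 0 :=
  Nat.count_succ _ n

lemma countBelow_add_countBetween (n : ℕ) {u v : α} (h : u ≤ v) :
    countBelow w n u + countBetween w n u v = countBelow w n v := by
  simp only [countBelow, countBetween, Nat.count_eq_card_filter_range]
  rw [← card_union_of_disjoint, ← filter_or]
  · congr! 3 with j
    exact ⟨fun hj => hj.elim (·.trans_le h) And.right,
      fun hj => (lt_or_ge (w j) u).imp_right (⟨·, hj⟩)⟩
  · exact disjoint_filter.2 fun _ _ hu hj => hu.not_ge hj.1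

lemma sum_straddle_eq_countStraddles (m : ℕ) {v : α} (hv : ∀ j ≤ m, w j ≠ v) :
    ∑ i ∈ range m, (if w (i + 1) ≤ v ∧ v < w i then 1 else 0) = countStraddles w m v := by
  rw [countStraddles, Nat.count_eq_card_filter_range, card_filter]
  refine sum_congr rfl fun i hi => ?_
  rw [mem_range] at hi
  simp only [(hv (i + 1) hi).le_iff_lt, (hv i hi.le).symm.le_iff_lt]

lemma prefixMad_succ {m : ℕ} (hm : ∀ j ≤ m, w j ≠ w (m + 1)) :
    prefixMad w (m + 1) = prefixMad w m + countStraddles w m (w (m + 1)) +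
      (2 * countBetween w m (w (m + 1)) (w m) + if w (m + 1) < w m then 1 else 0) := by
  have hold : ∑ i ∈ range m,
      (countBetween w (m + 2) (w (i + 1)) (w i) + countBetween w i (w (i + 1)) (w i)) =
      prefixMad w m + countStraddles w m (w (m + 1)) := by
    rw [← sum_straddle_eq_countStraddles w m hm, prefixMad, ← sum_add_distrib]
    refine sum_congr rfl fun i _ => ?_
    rw [countBetween_succ w (m + 1)]
    ring
  have hnew : countBetween w (m + 2) (w (m + 1)) (w m) =
      countBetween w m (w (m + 1)) (w m) + if w (m + 1) < w m then 1 else 0 := by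
    simp [countBetween_succ w]
  rw [prefixMad, sum_range_succ, hold, hnew]
  ring

lemma gapCol_mono (n : ℕ) {u v : α} (h : u ≤ v) : gapCol w n u ≤ gapCol w n v := by
  have := countBelow_mono w n h
  unfold gapCol
  omega

lemma gapCol_mem_Icc (n : ℕ) (v : α) : gapCol w n v ∈ Icc (-(n : ℤ)) n := by
  have : countBelow w n v ≤ n := Nat.count_le _
  rw [mem_Icc, gapCol]
  omega

lemma gapCol_succ_of_le {n : ℕ} {v : α} (h : v ≤ w n) :
    gapCol w (n + 1) v = gapCol w n v - 1 := by
  simp [gapCol, countBelow, Nat.count_succ, h.not_gt]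
  ring

lemma gapCol_succ_of_lt {n : ℕ} {v : α} (h : w n < v) :
    gapCol w (n + 1) v = gapCol w n v + 1 := by
  simp [gapCol, countBelow, Nat.count_succ, h]
  ring

lemma gapCol_succ_lt_iff {n : ℕ} {v : α} : gapCol w (n + 1) v < gapCol w n (w n) ↔ v ≤ w n := by
  rcases le_or_gt v (w n) with h | h
  · have := gapCol_mono w n h
    rw [gapCol_succ_of_le w h]
    exact iff_of_true (by omega) h
  · have := gapCol_mono w n h.le
    rw [gapCol_succ_of_lt w h]
    exact iff_of_false (by omega) h.not_ge

lemma lt_gapCol_succ_iff {n : ℕ} {v : α} : gapCol w n (w n) < gapCol w (n + 1) v ↔ w n < v := by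
  rcases le_or_gt v (w n) with h | h
  · have := gapCol_mono w n h
    rw [gapCol_succ_of_le w h]
    exact iff_of_false (by omega) h.not_gt
  · have := gapCol_mono w n h.le
    rw [gapCol_succ_of_lt w h]
    exact iff_of_true (by omega) h

lemma gapCol_mem_ribbon_iff {m : ℕ} {v : α} :
    gapCol w (m + 1) (w (m + 1)) < gapCol w (m + 2) v ∧ gapCol w (m + 2) v ≤ gapCol w m (w m) ↔
      w (m + 1) < v ∧ v ≤ w m := by
  rw [lt_gapCol_succ_iff]
  refine and_congr_right fun h => ?_
  rw [gapCol_succ_of_lt w h, Int.add_one_le_iff, gapCol_succ_lt_iff]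

lemma card_Ioc_gapCol {m : ℕ} (hm : w m ≠ w (m + 1)) :
    #(Ioc (gapCol w (m + 1) (w (m + 1))) (gapCol w m (w m))) =
      2 * countBetween w m (w (m + 1)) (w m) + if w (m + 1) < w m then 1 else 0 := by
  rw [Int.card_Ioc]
  rcases hm.lt_or_gt with h | h
  · have := (lt_gapCol_succ_iff w).2 h
    rw [countBetween_eq_zero w m h.le, if_neg h.not_gt]
    omega
  · have := countBelow_add_countBetween w m h.le
    rw [gapCol_succ_of_le w h.le, if_pos h, gapCol, gapCol]
    omega

lemma spreadHt_gapCol_succ {n k : ℕ} (P : DyckPath k) (v : α) :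
    spreadHt P (gapCol w n (w n)) (gapCol w (n + 1) v) = P.ht (gapCol w n v) := by
  rcases le_or_gt v (w n) with h | h
  · rw [spreadHt_of_lt P ((gapCol_succ_lt_iff w).2 h), gapCol_succ_of_le w h, sub_add_cancel]
  · rw [spreadHt_of_gt P ((lt_gapCol_succ_iff w).2 h), gapCol_succ_of_lt w h,
      add_sub_cancel_right]

end Word

/-! ### Growth along the zigzag path -/

section Growth

variable {α : Type*} [LinearOrder α] {w : ℕ → α}

/-- The invariants of the ribbon growth over the zigzag path along the word `w`, for the tiling
`T` obtained from the first `m + 1` letters. -/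
structure IsZigzagGrowth (w : ℕ → α) {m : ℕ} (T : DyckTiling (m + 1)) : Prop where
  lower_ht : ∀ v, T.lower.ht (gapCol w (m + 1) v) = 0
  upper_ht : ∀ v, T.upper.ht (gapCol w (m + 1) v) = 2 * countStraddles w m v
  specialCol : SpecialCol T (gapCol w m (w m))
  area_add_numTiles : T.area + T.numTiles = 2 * prefixMad w m

namespace IsZigzagGrowth

lemma of_order_zero {T : DyckTiling 0} {T' : DyckTiling 1}
    (h : RibbonGrowRel T (gapCol w 0 (w 0)) T') : IsZigzagGrowth w T' := by
  have hmax (x : ℤ) : EligibleCol T.upper.ht T.tiles x → x ≤ gapCol w 0 (w 0) := by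
    simp [EligibleCol, DyckPath.ht_of_order_zero]
  have hc : gapCol w 0 (w 0) < gapCol w 0 (w 0) →
      EligibleCol T.upper.ht T.tiles (gapCol w 0 (w 0)) := fun hlt => absurd hlt (lt_irrefl _)
  have hcells : skewCells T.lower T.upper = ∅ := card_eq_zero.1 T.area_of_order_zero
  refine ⟨fun v => ?_, fun v => ?_, h.specialCol, ?_⟩
  · rw [h.1, spreadHt_gapCol_succ, DyckPath.ht_of_order_zero]
  · rw [h.upper_ht_eq hmax hc, spreadHt_gapCol_succ, DyckPath.ht_of_order_zero,
      if_neg fun hv => hv.1.not_ge hv.2]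
    simp [countStraddles]
  · rw [h.area_add_numTiles_eq hmax hc, T.area_of_order_zero, T.numTiles_of_order_zero, hcells]
    simp [prefixMad]

lemma card_column {m : ℕ} {T : DyckTiling (m + 1)} (h : IsZigzagGrowth w T) (v : α) :
    #{c ∈ skewCells T.lower T.upper | c.1 = gapCol w (m + 1) v} = countStraddles w m v := by
  have hcol := two_mul_card_skewCells_column T.lower T.upper (gapCol_mem_Icc w (m + 1) v)
    (T.below _)
  rw [h.lower_ht, h.upper_ht] at hcol
  omega

lemma succ {m : ℕ} {T : DyckTiling (m + 1)} {T' : DyckTiling (m + 2)} (h : IsZigzagGrowth w T)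
    (hm : ∀ j ≤ m, w j ≠ w (m + 1)) (hgrow : RibbonGrowRel T (gapCol w (m + 1) (w (m + 1))) T') :
    IsZigzagGrowth w T' := by
  obtain ⟨hc, hmax⟩ := h.specialCol
  refine ⟨fun v => ?_, fun v => ?_, hgrow.specialCol, ?_⟩
  · rw [hgrow.1, spreadHt_gapCol_succ, h.lower_ht]
  · rw [hgrow.upper_ht_eq hmax fun _ => hc, spreadHt_gapCol_succ, h.upper_ht, countStraddles,
      countStraddles, Nat.count_succ]
    simp only [gapCol_mem_ribbon_iff]
    split_ifs <;> push_cast <;> ring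
  · rw [hgrow.area_add_numTiles_eq hmax fun _ => hc, h.area_add_numTiles, h.card_column,
      card_Ioc_gapCol w (hm m le_rfl), prefixMad_succ w hm]
    ring

end IsZigzagGrowth

lemma IsDTR.isZigzagGrowth (hw : Function.Injective w) {m : ℕ} {p : Fin (m + 1) → ℕ}
    {T : DyckTiling (m + 1)} (hT : IsDTR (m + 1) p T)
    (hp : ∀ i : Fin (m + 1), p i = 2 * countBelow w i (w i)) : IsZigzagGrowth w T := by
  have hcol : (p (Fin.last m) : ℤ) - m = gapCol w m (w m) := by
    simp [hp, gapCol]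
  induction m with
  | zero =>
    obtain _ | ⟨_, _, T₀, _, -, hgrow⟩ := hT
    exact .of_order_zero (hcol ▸ hgrow)
  | succ m ih =>
    obtain _ | ⟨_, _, T₀, _, hT₀, hgrow⟩ := hT
    refine .succ (ih hT₀ (fun i => hp i.castSucc) ?_) (fun j hj => hw.ne (by omega))
      (hcol ▸ hgrow)
    simp [hp, gapCol]

end Growth

/-! ### Permutations as words -/

section PermWord

variable {n : ℕ} {w : ℕ → ℕ} {σ : Equiv.Perm (Fin n)}

lemma count_eq_card_filter_fin {m : ℕ} (hm : m ≤ n) (p : ℕ → Prop) [DecidablePred p] :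
    Nat.count p m = #{j : Fin n | (j : ℕ) < m ∧ p j} := by
  rw [Nat.count_eq_card_filter_range, ← card_map Fin.valEmbedding]
  congr 1
  ext j
  simp only [mem_filter, mem_range, mem_map, mem_univ, true_and, Fin.valEmbedding_apply]
  exact ⟨fun ⟨hj, hpj⟩ => ⟨⟨j, hj.trans_le hm⟩, ⟨hj, hpj⟩, rfl⟩, by rintro ⟨j, hj, rfl⟩; exact hj⟩

lemma countBetween_eq_sub (hw : ∀ i : Fin n, w i = permWord σ i) (u : ℕ) {v : ℕ} (hv : v ≤ n) :
    countBetween w n u v = v - u := by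
  rw [countBetween, count_eq_card_filter_fin le_rfl, ← Nat.card_Ico,
    ← card_map (σ.toEmbedding.trans Fin.valEmbedding)]
  congr 1
  ext a
  simp only [mem_map, mem_filter, mem_univ, true_and, Fin.is_lt, hw, permWord, mem_Ico,
    Function.Embedding.trans_apply, Equiv.coe_toEmbedding, Fin.valEmbedding_apply]
  constructor
  · rintro ⟨j, hj, rfl⟩
    exact hj
  · exact fun ha => ⟨σ.symm ⟨a, ha.2.trans_le hv⟩, by simpa using ha, by simp⟩

lemma nextIdx_castSucc {m : ℕ} (i : Fin m) : nextIdx i.castSucc = i.succ := by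
  ext
  simp [nextIdx, Nat.mod_eq_of_lt]

lemma sum_descentFinset {m : ℕ} (u : Fin (m + 1) → ℕ) (f : Fin (m + 1) → ℕ)
    (hf : ∀ i : Fin m, u i.castSucc ≤ u i.succ → f i.castSucc = 0) :
    ∑ i ∈ descentFinset u, f i = ∑ i : Fin m, f i.castSucc := by
  rw [descentFinset, sum_filter, Fin.sum_univ_castSucc]
  simp only [Fin.val_last, lt_self_iff_false, false_and, if_false, add_zero]
  refine sum_congr rfl fun i _ => ?_
  rw [nextIdx_castSucc, Fin.val_castSucc]
  split_ifs with h
  · rfl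
  · exact (hf i (by omega)).symm

lemma desdif_eq_sum_countBetween {m : ℕ} {σ : Equiv.Perm (Fin (m + 1))}
    (hw : ∀ i : Fin (m + 1), w i = permWord σ i) :
    desdif σ = ∑ i ∈ range m, countBetween w (m + 1) (w (i + 1)) (w i) := by
  rw [desdif, sum_descentFinset, sum_range]
  · refine sum_congr rfl fun i _ => ?_
    have hi : w i ≤ m + 1 := (hw i.castSucc).trans_le (σ i.castSucc).is_lt.le
    rw [countBetween_eq_sub hw _ hi, nextIdx_castSucc, ← hw, ← hw, Fin.val_castSucc, Fin.val_succ]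
  · intro i hi
    rw [nextIdx_castSucc, Nat.sub_eq_zero_of_le hi]

lemma resStat_eq_sum_countBetween {m : ℕ} {σ : Equiv.Perm (Fin (m + 1))}
    (hw : ∀ i : Fin (m + 1), w i = permWord σ i) :
    resStat σ = ∑ i ∈ range m, countBetween w i (w (i + 1)) (w i) := by
  rw [resStat, sum_descentFinset, sum_range]
  · refine sum_congr rfl fun i _ => ?_
    rw [countBetween, count_eq_card_filter_fin (n := m + 1) (by omega), nextIdx_castSucc]
    congr 1
    ext k
    have hsucc : w (i + 1) = permWord σ i.succ := hw i.succ
    have hcast : w i = permWord σ i.castSucc := hw i.castSucc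
    simp only [mem_filter, mem_univ, true_and, hsucc, hcast, hw, Fin.lt_def, Fin.val_castSucc]
    refine and_congr_right fun hk => and_congr_left fun _ => ?_
    have hne : σ i.succ ≠ σ k := σ.injective.ne (Fin.ne_of_val_ne (by rw [Fin.val_succ]; omega))
    rw [Nat.lt_iff_le_and_ne]
    exact and_iff_left fun h => hne (Fin.ext h)
  · intro i hi
    rw [card_eq_zero, filter_eq_empty_iff, nextIdx_castSucc]
    intro k _
    omega

lemma mad_eq_prefixMad {m : ℕ} {σ : Equiv.Perm (Fin (m + 1))}
    (hw : ∀ i : Fin (m + 1), w i = permWord σ i) : mad σ = prefixMad w m := by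
  rw [mad, desdif_eq_sum_countBetween hw, resStat_eq_sum_countBetween hw, prefixMad,
    sum_add_distrib]

end PermWord

/-! ### The zigzag path -/

section Zigzag

variable {n : ℕ} {Z : DyckPath n}

/-- `Z` is the zigzag path `(UD)^n`: positions being 0-based, the up steps are the even ones. -/
def DyckPath.IsZigzag (Z : DyckPath n) : Prop :=
  ∀ i : Fin (2 * n), Z.step i = decide ((i : ℕ) % 2 = 0)

lemma IsChord.even_left {p q : ℕ} (h : IsChord Z p q) (hZ : Z.IsZigzag) : Even p := by
  obtain ⟨-, -, ⟨hp, hup⟩, -⟩ := h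
  rwa [hZ, decide_eq_true_eq, ← Nat.even_iff] at hup

lemma IsChord.eq_succ {p q : ℕ} (h : IsChord Z p q) (hZ : Z.IsZigzag) : q = p + 1 := by
  have hp := Nat.even_iff.1 (h.even_left hZ)
  obtain ⟨hpq, hq, -, -, -, habove⟩ := h
  have hodd : ¬ (p + 1) % 2 = 0 := by omega
  by_contra hne
  have hpeak : Z.pt (p + 1) = Z.pt p + 1 := by
    rw [Z.pt_succ (by omega), hZ, if_pos (decide_eq_true hp)]
  have hvalley : Z.pt (p + 2) = Z.pt (p + 1) - 1 := by
    rw [Z.pt_succ (k := p + 1) (by omega), hZ, if_neg (mt of_decide_eq_true hodd), sub_eq_add_neg]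
  have := habove (p + 2) (by omega) (by omega)
  omega

lemma ChordLabeling.r_lt_l_iff (C : ChordLabeling Z) (hZ : Z.IsZigzag) (i j : Fin n) :
    C.r j < C.l i ↔ C.l j < C.l i := by
  obtain ⟨a, ha⟩ := (C.chord i).even_left hZ
  obtain ⟨b, hb⟩ := (C.chord j).even_left hZ
  have := (C.chord j).eq_succ hZ
  omega

lemma seqOf_eq_two_mul_countBelow (C : ChordLabeling Z) (hZ : Z.IsZigzag)
    {σ : Equiv.Perm (Fin n)} (hσ : IsStandardization C.l σ) {w : ℕ → ℕ}
    (hw : ∀ i : Fin n, w i = permWord σ i) (i : Fin n) :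
    seqOf C i = 2 * countBelow w i (w i) := by
  have hbelow : countBelow w i (w i) = #{j : Fin n | j < i ∧ C.l j < C.l i} := by
    rw [countBelow, count_eq_card_filter_fin i.is_le']
    simp only [hw, permWord, Fin.val_fin_lt, hσ _ _]
  simp only [seqOf, C.r_lt_l_iff hZ, hbelow, two_mul]

end Zigzag

/-- For every permutation `σ` of `{1, …, n}`,
`art(DTR(zigzag_n, σ)) = mad(σ)`. -/
theorem art_DTR_zigzag_eq_mad (n : ℕ) (Z : DyckPath n)
    (hZ : ∀ i : Fin (2 * n), Z.step i = decide ((i : ℕ) % 2 = 0))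
    (σ : Equiv.Perm (Fin n)) (T : DyckTiling n) (hT : IsDTRof Z σ T) :
    T.art = mad σ := by
  obtain ⟨C, hσ, hDTR⟩ := hT
  rw [DyckTiling.art]
  cases n with
  | zero =>
    rw [T.area_of_order_zero, T.numTiles_of_order_zero]
    simp [mad, desdif, resStat, descentFinset]
  | succ m =>
    let w : Equiv.Perm ℕ := σ.viaEmbedding Fin.valEmbedding
    have hw (i : Fin (m + 1)) : w i = permWord σ i := σ.viaEmbedding_apply Fin.valEmbedding i
    have hgrowth : IsZigzagGrowth w T :=
      hDTR.isZigzagGrowth w.injective (seqOf_eq_two_mul_countBelow C hZ hσ hw)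
    rw [hgrowth.area_add_numTiles, Nat.mul_div_cancel_left _ two_pos, mad_eq_prefixMad hw]

end
end

section
/- Let λ be a Dyck path of order n and L a natural labeling of its chord poset P_λ, and let ℓ_i and r_i denote the positions of the left and right endpoints of the chord labeled i. Then the inversion set of the word ℓ = ℓ_1⋯ℓ_n is contained in the inversion set of the word r = r_1⋯r_n: INV(ℓ) ⊆ INV(r). In particular, if σ and τ are the standardizations of ℓ and r respectively, then INV(σ) ⊆ INV(τ). -/
open Finset

noncomputable section

namespace IsChord

variable {n : ℕ} {P : DyckPath n} {p q p' q' : ℕ}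

theorem pt_left_le_pt (h : IsChord P p q) {m : ℕ} (hpm : p ≤ m) (hmq : m ≤ q + 1) :
    P.pt p ≤ P.pt m := by
  obtain ⟨-, -, -, -, hclose, habove⟩ := h
  rcases hpm.eq_or_lt with rfl | hpm
  · exact le_rfl
  rcases hmq.eq_or_lt with rfl | hmq
  · exact hclose.ge
  · exact (habove m hpm (Nat.lt_succ_iff.mp hmq)).le

theorem disjoint_or_nested (h : IsChord P p q) (h' : IsChord P p' q') (hp : p < p') :
    q < p' ∨ q' < q := by
  obtain ⟨-, -, -, -, hclose, habove⟩ := h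
  by_contra! hcross
  obtain ⟨hp'q, hqq'⟩ := hcross
  have : P.pt p < P.pt p := calc
    P.pt p < P.pt p' := habove p' hp hp'q
    _ ≤ P.pt (q + 1) := h'.pt_left_le_pt (by lia) (by lia)
    _ = P.pt p := hclose
  exact this.false

end IsChord

theorem ChordLabeling.right_lt_left_of_lt {n : ℕ} {P : DyckPath n} (C : ChordLabeling P)
    {i j : Fin n} (hij : i < j) (hl : C.l j < C.l i) : C.r j < C.l i :=
  ((C.chord j).disjoint_or_nested (C.chord i) hl).resolve_right
    fun hr => hij.not_gt (C.natural i j hl hr)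

theorem IsStandardization.inversions_subset {n : ℕ} {v w : Fin n → ℕ}
    {σ τ : Equiv.Perm (Fin n)} (hσ : IsStandardization v σ) (hτ : IsStandardization w τ)
    (hvw : ∀ i j : Fin n, i < j → v j < v i → w j < w i) (i j : Fin n) (hij : i < j)
    (h : σ j < σ i) : τ j < τ i :=
  (hτ j i).mpr (hvw i j hij ((hσ j i).mp h))

/-- For any natural labeling of the chord poset of a Dyck path,
`INV(ℓ) ⊆ INV(r)`; in particular the standardizations `σ` of `ℓ` and `τ` of `r`
satisfy `INV(σ) ⊆ INV(τ)`. -/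
theorem inversions_left_subset_right (n : ℕ) (lam : DyckPath n)
    (C : ChordLabeling lam) :
    (∀ i j : Fin n, i < j → C.l j < C.l i → C.r j < C.r i) ∧
    (∀ σ τ : Equiv.Perm (Fin n), IsStandardization C.l σ → IsStandardization C.r τ →
      ∀ i j : Fin n, i < j → σ j < σ i → τ j < τ i) := by
  have hINV : ∀ i j : Fin n, i < j → C.l j < C.l i → C.r j < C.r i := fun i j hij hl =>
    calc
      C.r j < C.l i := C.right_lt_left_of_lt hij hl
      _ < C.r i := (C.chord i).1
  exact ⟨hINV, fun _ _ hσ hτ => hσ.inversions_subset hτ hINV⟩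

end
end
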